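/- Let D = (0,1)^d and let K : D̄ × D̄ → ℝ be measurable with K(x,·) ∈ L²(D) for every x, with Λ := sup_{x∈D̄} ‖K(x,·)‖_{L²(D)} < ∞, and such that ⟨∫_D K(·,y) φ(y) dy, φ⟩_{L²(D)} ≥ a ‖∫_D K(·,y) φ(y) dy‖²_{L²(D)} for every φ ∈ L²(D), for some constant a > 0. Let F : ℝ → ℝ be continuous and bounded with (x − y)(F(x) − F(y)) ≥ −L|x − y|² for all x, y ∈ ℝ and some 0 ≤ L < a, and let g ∈ L²(D). Suppose u, u_n ∈ 𝒞₀(D̄) and η, η_n ∈ 𝒞₀(D̄) satisfy u(x) + ∫_D K(x,y)F(u(y))dy = ∫_D K(x,y)g(y)dy + η(x) and u_n(x) + ∫_D K(x,y)F(u_n(y))dy = ∫_D K(x,y)g(y)dy + η_n(x) for all x ∈ D̄. If ‖η_n − η‖_{L²(D)} → 0 as n → ∞, then ‖u_n − u‖_{L²(D)} → 0 as n → ∞. -/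

import Mathlib

open MeasureTheory

noncomputable section

/-- The open unit cube `D = (0,1)^d ⊆ ℝ^d`. -/
def openCube (d : ℕ) : Set (Fin d → ℝ) := Set.univ.pi fun _ => Set.Ioo (0 : ℝ) 1

/-- The closed unit cube `D̄ = [0,1]^d ⊆ ℝ^d`. -/
def closedCube (d : ℕ) : Set (Fin d → ℝ) := Set.Icc 0 1

/-- The boundary `∂D = D̄ \ D` of the unit cube. -/
def cubeBoundary (d : ℕ) : Set (Fin d → ℝ) := closedCube d \ openCube d

/-- Lebesgue measure on `D = (0,1)^d` (the reference measure for `L²(D)`). -/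
def cubeMeasure (d : ℕ) : Measure (Fin d → ℝ) := volume.restrict (openCube d)

/-- The Euclidean norm on `ℝ^d`. -/
def euclidNorm {d : ℕ} (v : Fin d → ℝ) : ℝ := Real.sqrt (∑ i, v i ^ 2)

open Filter Topology

/-! The differences `w = uₙ - u`, `z = ηₙ - η` and `f = F ∘ uₙ - F ∘ u` are linked by
`z - w = ∫ K(·, y) f(y) dy`. Testing the cocoercivity of `K` with `f` gives
`a ‖z - w‖² ≤ ⟪z - w, f⟫`, and the one-sided Lipschitz condition on `F` gives
`-L ‖w‖² ≤ ⟪w, f⟫`. Adding the two and absorbing the cross term `2a ⟪z, w⟫` by Young's inequality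
bounds `‖w‖²` by a multiple of `‖z‖ ‖f‖ + ‖z‖²`, and `‖f‖` stays bounded because `F` is
bounded and the measure finite. -/

open scoped InnerProductSpace

section InnerProductSpace

variable {E : Type*} [NormedAddCommGroup E] [InnerProductSpace ℝ E] {a L : ℝ}

theorem half_sub_mul_norm_sq_le_of_cocoercive {w z f : E} (hLa : L < a)
    (hcoer : a * ‖z - w‖ ^ 2 ≤ ⟪z - w, f⟫_ℝ) (hmono : -(L * ‖w‖ ^ 2) ≤ ⟪w, f⟫_ℝ) :
    (a - L) / 2 * ‖w‖ ^ 2 ≤ ‖z‖ * ‖f‖ + (2 * a ^ 2 / (a - L) - a) * ‖z‖ ^ 2 := by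
  have hc : 0 < a - L := sub_pos.2 hLa
  have cauchy_schwarz : ⟪z, f⟫_ℝ ≤ ‖z‖ * ‖f‖ := real_inner_le_norm z f
  have young : 2 * a * ⟪z, w⟫_ℝ ≤ (a - L) / 2 * ‖w‖ ^ 2 + 2 * a ^ 2 / (a - L) * ‖z‖ ^ 2 := by
    have hsq : (a - L) / 2 * ‖w - (2 * a / (a - L)) • z‖ ^ 2 =
        (a - L) / 2 * ‖w‖ ^ 2 + 2 * a ^ 2 / (a - L) * ‖z‖ ^ 2 - 2 * a * ⟪z, w⟫_ℝ := by
      rw [norm_sub_sq_real, norm_smul, mul_pow, Real.norm_eq_abs, sq_abs, real_inner_smul_right,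
        real_inner_comm]
      field
    have hnonneg : 0 ≤ (a - L) / 2 * ‖w - (2 * a / (a - L)) • z‖ ^ 2 := by positivity
    linarith
  rw [norm_sub_sq_real, inner_sub_left] at hcoer
  linarith

theorem tendsto_zero_of_cocoercive {ι : Type*} {l : Filter ι} {w z f : ι → E} {C : ℝ}
    (hLa : L < a) (hcoer : ∀ i, a * ‖z i - w i‖ ^ 2 ≤ ⟪z i - w i, f i⟫_ℝ)
    (hmono : ∀ i, -(L * ‖w i‖ ^ 2) ≤ ⟪w i, f i⟫_ℝ) (hf : ∀ i, ‖f i‖ ≤ C)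
    (hz : Tendsto z l (𝓝 0)) : Tendsto w l (𝓝 0) := by
  have hc : 0 < (a - L) / 2 := half_pos (sub_pos.2 hLa)
  have hbound : ∀ i, (a - L) / 2 * ‖w i‖ ^ 2 ≤
      ‖z i‖ * C + (2 * a ^ 2 / (a - L) - a) * ‖z i‖ ^ 2 := fun i =>
    (half_sub_mul_norm_sq_le_of_cocoercive hLa (hcoer i) (hmono i)).trans <| by gcongr; exact hf i
  have hlim : Tendsto (fun i => ‖z i‖ * C + (2 * a ^ 2 / (a - L) - a) * ‖z i‖ ^ 2) l (𝓝 0) := by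
    have hz' := tendsto_zero_iff_norm_tendsto_zero.1 hz
    simpa using (hz'.mul_const C).add ((hz'.pow 2).const_mul (2 * a ^ 2 / (a - L) - a))
  have hsq : Tendsto (fun i => ‖w i‖ ^ 2) l (𝓝 0) := by
    simpa only [inv_mul_cancel_left₀ hc.ne', mul_zero] using
      (squeeze_zero (fun i => by positivity) hbound hlim).const_mul ((a - L) / 2)⁻¹
  simpa [tendsto_zero_iff_norm_tendsto_zero] using hsq.sqrt

end InnerProductSpace

section MeasureSpace

variable {α : Type*} [MeasurableSpace α] {μ : Measure α}

theorem real_inner_toLp {f g : α → ℝ} (hf : MemLp f 2 μ) (hg : MemLp g 2 μ) :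
    ⟪hf.toLp f, hg.toLp g⟫_ℝ = ∫ x, f x * g x ∂μ := by
  rw [L2.inner_def]
  refine integral_congr_ae ?_
  filter_upwards [hf.coeFn_toLp, hg.coeFn_toLp] with x hfx hgx
  rw [hfx, hgx, RCLike.inner_apply, conj_trivial, mul_comm]

theorem norm_toLp_sq {f : α → ℝ} (hf : MemLp f 2 μ) :
    ‖hf.toLp f‖ ^ 2 = ∫ x, f x ^ 2 ∂μ := by
  rw [← real_inner_self_eq_norm_sq, real_inner_toLp]
  simp only [sq]

section KernelIntegral

/-- The Fredholm integral operator `φ ↦ ∫ K(·, y) φ(y) dμ(y)` with kernel `K`, acting on functions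
rather than on `L²` classes because the equations it occurs in are pointwise. Its value at `x` is
`0` when `K(x, ·) φ` is not integrable. -/
def kernelIntegral (μ : Measure α) (K : α → α → ℝ) (φ : α → ℝ) (x : α) : ℝ :=
  ∫ y, K x y * φ y ∂μ

/-- Cocoercivity on `L²(μ)`, with constant `a`, of the integral operator `T` with kernel `K`:
the Poincaré-type inequality `a ‖T φ‖² ≤ ⟪T φ, φ⟫`, written with Bochner integrals so that `T φ`
need not be known to lie in `L²(μ)`. -/
def IsCocoerciveKernel (μ : Measure α) (K : α → α → ℝ) (a : ℝ) : Prop :=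
  ∀ φ : α → ℝ, MemLp φ 2 μ →
    a * ∫ x, kernelIntegral μ K φ x ^ 2 ∂μ ≤ ∫ x, kernelIntegral μ K φ x * φ x ∂μ

variable {K : α → α → ℝ} {a : ℝ} {φ ψ : α → ℝ}

theorem IsCocoerciveKernel.mul_norm_sq_le_inner (hK : IsCocoerciveKernel μ K a)
    (hφ : MemLp φ 2 μ) (hψ : MemLp ψ 2 μ) (hφψ : kernelIntegral μ K φ =ᵐ[μ] ψ) :
    a * ‖hψ.toLp ψ‖ ^ 2 ≤ ⟪hψ.toLp ψ, hφ.toLp φ⟫_ℝ := by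
  have hsq : ∫ x, kernelIntegral μ K φ x ^ 2 ∂μ = ∫ x, ψ x ^ 2 ∂μ :=
    integral_congr_ae (hφψ.mono fun x hx => by simp only [hx])
  have hmul : ∫ x, kernelIntegral μ K φ x * φ x ∂μ = ∫ x, ψ x * φ x ∂μ :=
    integral_congr_ae (hφψ.mono fun x hx => by simp only [hx])
  rw [norm_toLp_sq, real_inner_toLp, ← hsq, ← hmul]
  exact hK φ hφ

theorem kernelIntegral_sub (hK : ∀ᵐ x ∂μ, MemLp (K x) 2 μ) (hφ : MemLp φ 2 μ)
    (hψ : MemLp ψ 2 μ) :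
    kernelIntegral μ K (φ - ψ) =ᵐ[μ] kernelIntegral μ K φ - kernelIntegral μ K ψ := by
  filter_upwards [hK] with x hKx
  simp only [kernelIntegral, Pi.sub_apply, mul_sub]
  exact integral_sub (hKx.integrable_mul hφ) (hKx.integrable_mul hψ)

end KernelIntegral

section Nonlinearity

variable {F : ℝ → ℝ} {M L : ℝ} {u v : α → ℝ}

theorem memLp_comp_of_bounded [IsFiniteMeasure μ] (hF : Measurable F) (hFM : ∀ t, |F t| ≤ M)
    (p : ENNReal) (hu : AEStronglyMeasurable u μ) : MemLp (F ∘ u) p μ :=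
  .of_bound (hF.comp_aemeasurable hu.aemeasurable).aestronglyMeasurable M
    (.of_forall fun _ => hFM _)

theorem norm_toLp_comp_le [IsFiniteMeasure μ] {p : ENNReal} (hFM : ∀ t, |F t| ≤ M)
    (hFu : MemLp (F ∘ u) p μ) :
    ‖hFu.toLp (F ∘ u)‖ ≤ measureUnivNNReal μ ^ p.toReal⁻¹ * M :=
  Lp.norm_le_of_ae_bound ((abs_nonneg _).trans (hFM 0)) <| by
    filter_upwards [hFu.coeFn_toLp] with x hx
    rw [hx]
    exact hFM _

theorem neg_mul_norm_sq_le_inner_comp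
    (hFmono : ∀ s t : ℝ, -(L * (s - t) ^ 2) ≤ (s - t) * (F s - F t))
    (huv : MemLp (u - v) 2 μ) (hFuv : MemLp (F ∘ u - F ∘ v) 2 μ) :
    -(L * ‖huv.toLp (u - v)‖ ^ 2) ≤
      ⟪huv.toLp (u - v), hFuv.toLp (F ∘ u - F ∘ v)⟫_ℝ := by
  rw [norm_toLp_sq, real_inner_toLp, ← integral_const_mul, ← integral_neg]
  exact integral_mono (huv.integrable_sq.const_mul L).neg (huv.integrable_mul hFuv)
    fun x => hFmono (u x) (v x)

end Nonlinearity

theorem stmt13_general [IsFiniteMeasure μ] {K : α → α → ℝ} (hK : ∀ᵐ x ∂μ, MemLp (K x) 2 μ)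
    {a L : ℝ} (hcoer : IsCocoerciveKernel μ K a) (hLa : L < a)
    {F : ℝ → ℝ} (hF : Measurable F) {M : ℝ} (hFM : ∀ t, |F t| ≤ M)
    (hFmono : ∀ s t : ℝ, -(L * (s - t) ^ 2) ≤ (s - t) * (F s - F t))
    {ι : Type*} {l : Filter ι} {h u η : α → ℝ} {uₙ ηₙ : ι → α → ℝ}
    (hu : MemLp u 2 μ) (huₙ : ∀ n, MemLp (uₙ n) 2 μ)
    (hη : MemLp η 2 μ) (hηₙ : ∀ n, MemLp (ηₙ n) 2 μ)
    (hequ : ∀ᵐ x ∂μ, u x + kernelIntegral μ K (F ∘ u) x = h x + η x)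
    (hequₙ : ∀ n, ∀ᵐ x ∂μ, uₙ n x + kernelIntegral μ K (F ∘ uₙ n) x = h x + ηₙ n x)
    (hηconv : Tendsto (fun n => eLpNorm (ηₙ n - η) 2 μ) l (𝓝 0)) :
    Tendsto (fun n => eLpNorm (uₙ n - u) 2 μ) l (𝓝 0) := by
  have hFu := memLp_comp_of_bounded hF hFM 2 hu.aestronglyMeasurable
  have hFuₙ n := memLp_comp_of_bounded hF hFM 2 (huₙ n).aestronglyMeasurable
  rw [← Lp.tendsto_Lp_iff_tendsto_eLpNorm'' _ hηₙ _ hη, ← tendsto_sub_nhds_zero_iff] at hηconv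
  rw [← Lp.tendsto_Lp_iff_tendsto_eLpNorm'' _ huₙ _ hu, ← tendsto_sub_nhds_zero_iff]
  have hdiff n : kernelIntegral μ K (F ∘ uₙ n - F ∘ u) =ᵐ[μ] ηₙ n - η - (uₙ n - u) := by
    filter_upwards [kernelIntegral_sub hK (hFuₙ n) hFu, hequ, hequₙ n] with x hsub hx hxₙ
    simp only [hsub, Pi.sub_apply]
    linarith
  refine tendsto_zero_of_cocoercive hLa
    (f := fun n => (hFuₙ n).toLp (F ∘ uₙ n) - hFu.toLp (F ∘ u)) (fun n => ?_) (fun n => ?_)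
    (fun n => norm_sub_le_of_le (norm_toLp_comp_le hFM (hFuₙ n)) (norm_toLp_comp_le hFM hFu)) hηconv
  · exact hcoer.mul_norm_sq_le_inner ((hFuₙ n).sub hFu)
      (((hηₙ n).sub hη).sub ((huₙ n).sub hu)) (hdiff n)
  · exact neg_mul_norm_sq_le_inner_comp hFmono ((huₙ n).sub hu) ((hFuₙ n).sub hFu)

end MeasureSpace

section Cube

variable {d : ℕ}

theorem openCube_subset_closedCube : openCube d ⊆ closedCube d :=
  (Set.pi_mono fun _ _ => Set.Ioo_subset_Icc_self).trans (Set.pi_univ_Icc 0 1).subset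

instance isFiniteMeasure_cubeMeasure : IsFiniteMeasure (cubeMeasure d) :=
  isFiniteMeasure_restrict.2
    ((measure_mono openCube_subset_closedCube).trans_lt isCompact_Icc.measure_lt_top).ne

theorem ae_cubeMeasure_of_forall_mem {p : (Fin d → ℝ) → Prop} (hp : ∀ x ∈ closedCube d, p x) :
    ∀ᵐ x ∂cubeMeasure d, p x :=
  (ae_restrict_mem (.univ_pi fun _ => measurableSet_Ioo)).mono fun x hx =>
    hp x (openCube_subset_closedCube hx)

theorem memLp_cubeMeasure {f : (Fin d → ℝ) → ℝ} (hf : ContinuousOn f (closedCube d))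
    (p : ENNReal) : MemLp f p (cubeMeasure d) := by
  obtain ⟨C, hC⟩ := isCompact_Icc.exists_bound_of_continuousOn hf
  have hmeas : AEStronglyMeasurable f (cubeMeasure d) :=
    (hf.aestronglyMeasurable measurableSet_Icc).mono_set openCube_subset_closedCube
  exact .of_bound hmeas C (ae_cubeMeasure_of_forall_mem hC)

end Cube

/-- Under the Poincaré-type inequality for the kernel `K` (with
`Λ = sup_x ‖K(x,·)‖_{L²} < ∞`), the monotonicity condition on the continuous bounded
function `F` with `0 ≤ L < a`, if `u, uₙ ∈ 𝒞₀(D̄)` solve the integral equations with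
data `η, ηₙ ∈ 𝒞₀(D̄)` and `‖ηₙ − η‖_{L²(D)} → 0`, then `‖uₙ − u‖_{L²(D)} → 0`. -/
theorem stmt13 (d : ℕ) (hd : 0 < d)
    (K : (Fin d → ℝ) → (Fin d → ℝ) → ℝ) (hKmeas : Measurable (Function.uncurry K))
    (hKL2 : ∀ x ∈ closedCube d, MemLp (K x) 2 (cubeMeasure d))
    (Λ : ℝ) (hΛ : ∀ x ∈ closedCube d, eLpNorm (K x) 2 (cubeMeasure d) ≤ ENNReal.ofReal Λ)
    (a : ℝ) (ha : 0 < a)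
    (hPoincare : ∀ φ : (Fin d → ℝ) → ℝ, MemLp φ 2 (cubeMeasure d) →
      a * ∫ x, (∫ y, K x y * φ y ∂(cubeMeasure d)) ^ 2 ∂(cubeMeasure d)
        ≤ ∫ x, (∫ y, K x y * φ y ∂(cubeMeasure d)) * φ x ∂(cubeMeasure d))
    (F : ℝ → ℝ) (hFcont : Continuous F) (MF : ℝ) (hFbd : ∀ t, |F t| ≤ MF)
    (L : ℝ) (hL0 : 0 ≤ L) (hLa : L < a)
    (hFmono : ∀ s t : ℝ, -(L * (s - t) ^ 2) ≤ (s - t) * (F s - F t))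
    (g : (Fin d → ℝ) → ℝ) (hg : MemLp g 2 (cubeMeasure d))
    (u : (Fin d → ℝ) → ℝ) (uₙ : ℕ → (Fin d → ℝ) → ℝ)
    (η : (Fin d → ℝ) → ℝ) (ηₙ : ℕ → (Fin d → ℝ) → ℝ)
    (hu : ContinuousOn u (closedCube d)) (hu0 : ∀ x ∈ cubeBoundary d, u x = 0)
    (huₙ : ∀ n, ContinuousOn (uₙ n) (closedCube d))
    (huₙ0 : ∀ n, ∀ x ∈ cubeBoundary d, uₙ n x = 0)
    (hη : ContinuousOn η (closedCube d)) (hη0 : ∀ x ∈ cubeBoundary d, η x = 0)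
    (hηₙ : ∀ n, ContinuousOn (ηₙ n) (closedCube d))
    (hηₙ0 : ∀ n, ∀ x ∈ cubeBoundary d, ηₙ n x = 0)
    (hequ : ∀ x ∈ closedCube d,
      u x + ∫ y, K x y * F (u y) ∂(cubeMeasure d)
        = (∫ y, K x y * g y ∂(cubeMeasure d)) + η x)
    (hequₙ : ∀ n, ∀ x ∈ closedCube d,
      uₙ n x + ∫ y, K x y * F (uₙ n y) ∂(cubeMeasure d)
        = (∫ y, K x y * g y ∂(cubeMeasure d)) + ηₙ n x)
    (hηconv : Tendsto (fun n => eLpNorm (fun y => ηₙ n y - η y) 2 (cubeMeasure d))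
      atTop (𝓝 0)) :
    Tendsto (fun n => eLpNorm (fun y => uₙ n y - u y) 2 (cubeMeasure d))
      atTop (𝓝 0) := by
  exact stmt13_general (ae_cubeMeasure_of_forall_mem hKL2) hPoincare hLa hFcont.measurable hFbd
    hFmono (memLp_cubeMeasure hu 2) (fun n => memLp_cubeMeasure (huₙ n) 2) (memLp_cubeMeasure hη 2)
    (fun n => memLp_cubeMeasure (hηₙ n) 2) (ae_cubeMeasure_of_forall_mem hequ)
    (fun n => ae_cubeMeasure_of_forall_mem (hequₙ n)) hηconv
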